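/- There exists a constant M > 0, depending only on A and C₀, such that for every t ≥ 0 one has ε ∫₀ᵗ ‖u(s,·)∂ₓu(s,·)‖²_{L²(ℝ)} ds ≤ M and ε³ ∫₀ᵗ ‖∂ₓ²u(s,·)‖²_{L²(ℝ)} ds ≤ M. -/

import Mathlib

open MeasureTheory

/-!
For `B = 2A/3`, `C = -A/3` all cubic terms cancel in the balance of the energy
`E = ‖u‖² + β ‖∂ₓu‖²`, so `E' = -2ε (‖∂ₓu‖² + β ‖∂ₓ²u‖²)`. In particular `E ≤ C₀`, and Agmon's
inequality gives `β u⁴ ≤ 4 ‖u‖² · β ‖∂ₓu‖² ≤ C₀²` pointwise.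

Consider `Z = (A² + 1) ‖u‖⁴_{L⁴} + ε² ‖∂ₓu‖²`. Its viscous dissipation contains
`D = (A² + 1) ε ‖u ∂ₓu‖² + ε³ ‖∂ₓ²u‖²`. Thanks to `β ≤ κ ε⁴` and the pointwise bounds on `u`,
Young's inequality absorbs every production term up to the energy dissipation:
`Z' + D ≤ K ε ‖∂ₓu‖² (1 + ε² ‖∂ₓu‖²) ≤ -(K / 2) E' (1 + Z)`, with `K` depending only on `A`, `C₀`
and `κ`. Hence `(1 + Z) exp (K E / 2)` has derivative at most `-D`, which bounds `∫ D` by the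
initial data uniformly in time, `ε` and `β`.
-/

open Function Set
open scoped ContDiff Topology

section PartialDerivatives

variable {F : Type*} [NormedAddCommGroup F] [NormedSpace ℝ F] {f : ℝ → ℝ → F} {t x : ℝ}

theorem hasDerivAt_fst_of_differentiableAt_uncurry (hf : DifferentiableAt ℝ (uncurry f) (t, x)) :
    HasDerivAt (fun τ => f τ x) (fderiv ℝ (uncurry f) (t, x) (1, 0)) t := by
  have hline : HasDerivAt (fun τ : ℝ => (τ, x)) (1, 0) t :=
    (hasDerivAt_id t).prodMk (hasDerivAt_const t x)
  exact hf.hasFDerivAt.comp_hasDerivAt t hline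

theorem hasDerivAt_snd_of_differentiableAt_uncurry (hf : DifferentiableAt ℝ (uncurry f) (t, x)) :
    HasDerivAt (f t) (fderiv ℝ (uncurry f) (t, x) (0, 1)) x := by
  have hline : HasDerivAt (fun y : ℝ => (t, y)) (0, 1) x :=
    (hasDerivAt_const x t).prodMk (hasDerivAt_id x)
  exact hf.hasFDerivAt.comp_hasDerivAt x hline

theorem contDiff_infty_deriv_fst (hf : ContDiff ℝ ∞ (uncurry f)) :
    ContDiff ℝ ∞ (uncurry fun t x => deriv (fun τ => f τ x) t) := by
  have h : (uncurry fun t x => deriv (fun τ => f τ x) t) =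
      fun p => fderiv ℝ (uncurry f) p (1, 0) := funext fun p =>
    (hasDerivAt_fst_of_differentiableAt_uncurry (hf.differentiable (by simp) p)).deriv
  rw [h]
  exact (hf.fderiv_right (by simp)).clm_apply contDiff_const

theorem contDiff_infty_deriv_snd (hf : ContDiff ℝ ∞ (uncurry f)) :
    ContDiff ℝ ∞ (uncurry fun t x => deriv (f t) x) := by
  have h : (uncurry fun t x => deriv (f t) x) = fun p => fderiv ℝ (uncurry f) p (0, 1) :=
    funext fun p =>
      (hasDerivAt_snd_of_differentiableAt_uncurry (hf.differentiable (by simp) p)).deriv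
  rw [h]
  exact (hf.fderiv_right (by simp)).clm_apply contDiff_const

theorem deriv_fst_deriv_snd_comm (hf : ContDiff ℝ 2 (uncurry f)) (t x : ℝ) :
    deriv (fun τ => deriv (f τ) x) t = deriv (fun y => deriv (fun τ => f τ y) t) x := by
  have hd : Differentiable ℝ (uncurry f) := hf.differentiable two_ne_zero
  have hd₂ : Differentiable ℝ (fderiv ℝ (uncurry f)) :=
    (hf.fderiv_right (m := 1) (by norm_num)).differentiable one_ne_zero
  have hsymm : IsSymmSndFDerivAt ℝ (uncurry f) (t, x) :=
    hf.contDiffAt.isSymmSndFDerivAt (by rw [minSmoothness_of_isRCLikeNormedField])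
  have htx : HasDerivAt (fun τ => fderiv ℝ (uncurry f) (τ, x))
      (fderiv ℝ (fderiv ℝ (uncurry f)) (t, x) (1, 0)) t :=
    hasDerivAt_fst_of_differentiableAt_uncurry (f := curry (fderiv ℝ (uncurry f))) (hd₂ (t, x))
  have hxt : HasDerivAt (fun y => fderiv ℝ (uncurry f) (t, y))
      (fderiv ℝ (fderiv ℝ (uncurry f)) (t, x) (0, 1)) x :=
    hasDerivAt_snd_of_differentiableAt_uncurry (f := curry (fderiv ℝ (uncurry f))) (hd₂ (t, x))
  simp_rw [(hasDerivAt_snd_of_differentiableAt_uncurry (hd _)).deriv,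
    (hasDerivAt_fst_of_differentiableAt_uncurry (hd _)).deriv]
  rw [(htx.clm_apply (hasDerivAt_const t (0, 1))).deriv,
    (hxt.clm_apply (hasDerivAt_const x (1, 0))).deriv, map_zero, hsymm.eq]

end PartialDerivatives

/-- Smooth functions `f t x` of time and space whose spatial support lies in an interval that does
not depend on `t`: the class in which all integrals over space may be differentiated in time. -/
structure SmoothWithSpatialSupport (f : ℝ → ℝ → ℝ) : Prop where
  contDiff : ContDiff ℝ ∞ (uncurry f)
  exists_support : ∃ R, ∀ t x, R ≤ |x| → f t x = 0

namespace SmoothWithSpatialSupport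

variable {f g : ℝ → ℝ → ℝ}

theorem contDiff_slice (hf : SmoothWithSpatialSupport f) (t : ℝ) : ContDiff ℝ ∞ (f t) :=
  hf.contDiff.comp (contDiff_const.prodMk contDiff_id)

theorem exists_isCompact (hf : SmoothWithSpatialSupport f) :
    ∃ K : Set ℝ, IsCompact K ∧ ∀ t, ∀ x ∉ K, f t x = 0 := by
  obtain ⟨R, hR⟩ := hf.exists_support
  refine ⟨Icc (-R) R, isCompact_Icc, fun t x hx => hR t x ?_⟩
  contrapose! hx
  exact abs_le.1 hx.le

theorem hasCompactSupport_slice (hf : SmoothWithSpatialSupport f) (t : ℝ) :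
    HasCompactSupport (f t) :=
  let ⟨_, hK, hfK⟩ := hf.exists_isCompact
  .intro hK (hfK t)

theorem integrable_slice (hf : SmoothWithSpatialSupport f) (t : ℝ) : Integrable (f t) :=
  (hf.contDiff_slice t).continuous.integrable_of_hasCompactSupport (hf.hasCompactSupport_slice t)

theorem deriv_fst (hf : SmoothWithSpatialSupport f) :
    SmoothWithSpatialSupport fun t x => deriv (fun τ => f τ x) t where
  contDiff := contDiff_infty_deriv_fst hf.contDiff
  exists_support := by
    obtain ⟨R, hR⟩ := hf.exists_support
    exact ⟨R, fun t x hx => by simp [hR _ x hx]⟩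

theorem deriv_snd (hf : SmoothWithSpatialSupport f) :
    SmoothWithSpatialSupport fun t x => deriv (f t) x where
  contDiff := contDiff_infty_deriv_snd hf.contDiff
  exists_support := by
    obtain ⟨R, hR⟩ := hf.exists_support
    refine ⟨R + 1, fun t x hx => ?_⟩
    have hzero : f t =ᶠ[𝓝 x] fun _ => 0 := by
      filter_upwards [(isOpen_lt continuous_const continuous_abs).mem_nhds
        (show R < |x| by linarith)] with y hy
      exact hR t y hy.le
    rw [hzero.deriv_eq, deriv_const]

theorem mul (hf : SmoothWithSpatialSupport f) (hg : SmoothWithSpatialSupport g) :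
    SmoothWithSpatialSupport fun t x => f t x * g t x where
  contDiff := hf.contDiff.mul hg.contDiff
  exists_support := by
    obtain ⟨R, hR⟩ := hf.exists_support
    exact ⟨R, fun t x hx => by simp [hR t x hx]⟩

theorem pow (hf : SmoothWithSpatialSupport f) {n : ℕ} (hn : n ≠ 0) :
    SmoothWithSpatialSupport fun t x => f t x ^ n where
  contDiff := hf.contDiff.pow n
  exists_support := by
    obtain ⟨R, hR⟩ := hf.exists_support
    exact ⟨R, fun t x hx => by simp [hR t x hx, hn]⟩

theorem continuous_integral (hf : SmoothWithSpatialSupport f) :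
    Continuous fun t => ∫ x, f t x := by
  obtain ⟨K, hK, hfK⟩ := hf.exists_isCompact
  rw [← continuousOn_univ]
  exact continuousOn_integral_of_compact_support hK hf.contDiff.continuous.continuousOn
    fun t x _ => hfK t x

theorem hasDerivAt_integral (hf : SmoothWithSpatialSupport f) (t : ℝ) :
    HasDerivAt (fun τ => ∫ x, f τ x) (∫ x, deriv (fun τ => f τ x) t) t := by
  obtain ⟨K, hK, hfK⟩ := hf.deriv_fst.exists_isCompact
  obtain ⟨M, hM⟩ := ((isCompact_closedBall t 1).prod hK).exists_bound_of_continuousOn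
    hf.deriv_fst.contDiff.continuous.continuousOn
  have hbound : ∀ x, ∀ τ ∈ Metric.closedBall t 1,
      ‖deriv (fun σ => f σ x) τ‖ ≤ K.indicator (fun _ => M) x := by
    intro x τ hτ
    by_cases hx : x ∈ K
    · simpa [hx] using hM (τ, x) ⟨hτ, hx⟩
    · simp [hx, hfK τ x hx]
  have hdiff (x τ : ℝ) : HasDerivAt (f · x) (deriv (fun σ => f σ x) τ) τ :=
    (hasDerivAt_fst_of_differentiableAt_uncurry
      (hf.contDiff.differentiable (by simp) (τ, x))).differentiableAt.hasDerivAt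
  exact (hasDerivAt_integral_of_dominated_loc_of_deriv_le
    (Metric.closedBall_mem_nhds t one_pos)
    (.of_forall fun τ => (hf.integrable_slice τ).aestronglyMeasurable) (hf.integrable_slice t)
    (hf.deriv_fst.integrable_slice t).aestronglyMeasurable (.of_forall hbound)
    ((integrable_indicator_iff hK.measurableSet).2 (integrableOn_const hK.measure_ne_top))
    (.of_forall fun x τ _ => hdiff x τ)).2

theorem hasDerivAt_integral_pow (hf : SmoothWithSpatialSupport f) {n : ℕ} (hn : n ≠ 0) (t : ℝ) :
    HasDerivAt (fun τ => ∫ x, f τ x ^ n)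
      (n * ∫ x, f t x ^ (n - 1) * deriv (fun τ => f τ x) t) t := by
  refine ((hf.pow hn).hasDerivAt_integral t).congr_deriv ?_
  rw [← integral_const_mul]
  refine integral_congr_ae (.of_forall fun x => ?_)
  have hdiff : DifferentiableAt ℝ (fun τ => f τ x) t :=
    (hasDerivAt_fst_of_differentiableAt_uncurry
      (hf.contDiff.differentiable (by simp) (t, x))).differentiableAt
  simp only [deriv_fun_pow hdiff]
  ring

theorem hasDerivAt_integral_deriv_sq (hf : SmoothWithSpatialSupport f) (t : ℝ) :
    HasDerivAt (fun τ => ∫ x, deriv (f τ) x ^ 2)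
      (-2 * ∫ x, deriv (deriv (f t)) x * deriv (fun τ => f τ x) t) t := by
  refine (hf.deriv_snd.hasDerivAt_integral_pow two_ne_zero t).congr_deriv ?_
  have hdiff {g : ℝ → ℝ → ℝ} (hg : SmoothWithSpatialSupport g) (x : ℝ) :
      HasDerivAt (g t) (deriv (g t) x) x :=
    ((hg.contDiff_slice t).differentiable (by simp) x).hasDerivAt
  have hparts : ∫ x, deriv (f t) x * deriv (fun y => deriv (fun τ => f τ y) t) x =
      -∫ x, deriv (deriv (f t)) x * deriv (fun τ => f τ x) t :=
    integral_mul_deriv_eq_deriv_mul_of_integrable (fun x _ => hdiff hf.deriv_snd x)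
      (fun x _ => hdiff hf.deriv_fst x)
      ((hf.deriv_snd.mul hf.deriv_fst.deriv_snd).integrable_slice t)
      ((hf.deriv_snd.deriv_snd.mul hf.deriv_fst).integrable_slice t)
      ((hf.deriv_snd.mul hf.deriv_fst).integrable_slice t)
  simp only [deriv_fst_deriv_snd_comm (hf.contDiff.of_le ENat.LEInfty.out) t]
  norm_num [hparts]

end SmoothWithSpatialSupport

section Inequalities

variable {α : Type*} [MeasurableSpace α] {μ : Measure α} {f g : α → ℝ}

theorem sq_integral_abs_mul_abs_le (hf : MemLp f 2 μ) (hg : MemLp g 2 μ) :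
    (∫ a, |f a * g a| ∂μ) ^ 2 ≤ (∫ a, f a ^ 2 ∂μ) * ∫ a, g a ^ 2 ∂μ := by
  have holder := integral_mul_norm_le_Lp_mul_Lq (μ := μ) (f := f) (g := g)
    Real.HolderConjugate.two_two (by simpa using hf) (by simpa using hg)
  simp only [Real.norm_eq_abs, Real.rpow_two, sq_abs, ← Real.sqrt_eq_rpow, ← abs_mul] at holder
  have hf0 : 0 ≤ ∫ a, f a ^ 2 ∂μ := by positivity
  have hg0 : 0 ≤ ∫ a, g a ^ 2 ∂μ := by positivity
  calc (∫ a, |f a * g a| ∂μ) ^ 2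
      ≤ (√(∫ a, f a ^ 2 ∂μ) * √(∫ a, g a ^ 2 ∂μ)) ^ 2 := by
        gcongr
    _ = _ := by rw [mul_pow, Real.sq_sqrt hf0, Real.sq_sqrt hg0]

theorem pow_four_le_integral_sq_mul_integral_deriv_sq {v : ℝ → ℝ} (hv : ContDiff ℝ 1 v)
    (hsupp : HasCompactSupport v) (x : ℝ) :
    v x ^ 4 ≤ 4 * (∫ y, v y ^ 2) * ∫ y, deriv v y ^ 2 := by
  have hv' : Continuous (deriv v) := hv.continuous_deriv le_rfl
  have hderiv (y : ℝ) : deriv (v ^ 2) y = 2 * (v y * deriv v y) := by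
    rw [deriv_pow (hv.differentiable one_ne_zero y)]
    push_cast
    ring
  have hint : Integrable fun y => |v y * deriv v y| :=
    ((hv.continuous.mul hv').integrable_of_hasCompactSupport hsupp.mul_right).abs
  have hsq : v x ^ 2 ≤ 2 * ∫ y, |v y * deriv v y| := calc
    v x ^ 2 = ∫ y in Iic x, 2 * (v y * deriv v y) := by
        simp_rw [← hderiv]
        exact (HasCompactSupport.integral_Iic_deriv_eq (hv.pow 2)
          (hsupp.comp_left (zero_pow two_ne_zero)) x).symm
    _ ≤ ‖∫ y in Iic x, 2 * (v y * deriv v y)‖ := le_abs_self _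
    _ ≤ ∫ y in Iic x, ‖2 * (v y * deriv v y)‖ := norm_integral_le_integral_norm _
    _ = 2 * ∫ y in Iic x, |v y * deriv v y| := by simp [integral_const_mul]
    _ ≤ 2 * ∫ y, |v y * deriv v y| := by
        gcongr
        · exact .of_forall fun _ => abs_nonneg _
        · exact Measure.restrict_le_self
  calc v x ^ 4 = (v x ^ 2) ^ 2 := by ring
    _ ≤ (2 * ∫ y, |v y * deriv v y|) ^ 2 := by gcongr
    _ = 4 * (∫ y, |v y * deriv v y|) ^ 2 := by ring
    _ ≤ 4 * ((∫ y, v y ^ 2) * ∫ y, deriv v y ^ 2) := by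
        gcongr
        exact sq_integral_abs_mul_abs_le (hv.continuous.memLp_of_hasCompactSupport hsupp)
          (hv'.memLp_of_hasCompactSupport hsupp.deriv)
    _ = _ := by ring

theorem mul_integral_mul_le_integral_sq_add_integral_sq (hf : MemLp f 2 μ) (hg : MemLp g 2 μ)
    (c : ℝ) {s : ℝ} (hs : 0 < s) :
    c * ∫ a, f a * g a ∂μ ≤ c ^ 2 / (4 * s) * (∫ a, f a ^ 2 ∂μ) + s * ∫ a, g a ^ 2 ∂μ := by
  rw [← integral_const_mul, ← integral_const_mul, ← integral_const_mul,
    ← integral_add (hf.integrable_sq.const_mul _) (hg.integrable_sq.const_mul _)]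
  refine integral_mono ((hf.integrable_mul hg).const_mul c)
    ((hf.integrable_sq.const_mul _).add (hg.integrable_sq.const_mul _)) fun a => ?_
  have hsq : 0 ≤ s * (g a - c / (2 * s) * f a) ^ 2 := by positivity
  have hexpand : s * (g a - c / (2 * s) * f a) ^ 2 =
      c ^ 2 / (4 * s) * f a ^ 2 + s * g a ^ 2 - c * (f a * g a) := by
    field_simp
    ring
  linarith

theorem mul_integral_mul_sq_le_mul_integral_sq {c d : ℝ}
    (hfg : Integrable (fun a => (f a * g a) ^ 2) μ) (hg : Integrable (fun a => g a ^ 2) μ)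
    (hcd : ∀ a, c * f a ^ 2 ≤ d) :
    c * ∫ a, (f a * g a) ^ 2 ∂μ ≤ d * ∫ a, g a ^ 2 ∂μ := by
  rw [← integral_const_mul, ← integral_const_mul]
  refine integral_mono (hfg.const_mul c) (hg.const_mul d) fun a => ?_
  calc c * (f a * g a) ^ 2 = c * f a ^ 2 * g a ^ 2 := by ring
    _ ≤ d * g a ^ 2 := by gcongr; exact hcd a

-- The weight `exp Φ ≥ 1` turns the hypothesis into `(F * exp Φ)' ≤ -D`.
theorem integral_dissipation_le_mul_exp {F F' Φ Φ' D : ℝ → ℝ} {T : ℝ} (hT : 0 ≤ T)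
    (hF : ∀ t ∈ Icc 0 T, HasDerivAt F (F' t) t) (hΦ : ∀ t ∈ Icc 0 T, HasDerivAt Φ (Φ' t) t)
    (hFT : 0 ≤ F T) (hΦ0 : ∀ t ∈ Ico 0 T, 0 ≤ Φ t)
    (hD : ContinuousOn D (Icc 0 T)) (hD0 : ∀ t ∈ Ico 0 T, 0 ≤ D t)
    (hle : ∀ t ∈ Ico 0 T, F' t + F t * Φ' t ≤ -D t) :
    ∫ s in (0 : ℝ)..T, D s ≤ F 0 * Real.exp (Φ 0) := by
  have hW (t : ℝ) (ht : t ∈ Icc 0 T) : HasDerivAt (fun τ => -(F τ * Real.exp (Φ τ)))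
      (-((F' t + F t * Φ' t) * Real.exp (Φ t))) t :=
    ((hF t ht).mul (hΦ t ht).exp).neg.congr_deriv (by ring)
  have hDW (t : ℝ) (ht : t ∈ Ico 0 T) : D t ≤ -((F' t + F t * Φ' t) * Real.exp (Φ t)) := calc
    D t ≤ D t * Real.exp (Φ t) :=
        le_mul_of_one_le_right (hD0 t ht) (Real.one_le_exp (hΦ0 t ht))
    _ ≤ -(F' t + F t * Φ' t) * Real.exp (Φ t) := by gcongr; linarith [hle t ht]
    _ = _ := by ring
  have hint := intervalIntegral.integral_le_sub_of_hasDeriv_right_of_le hT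
    (fun t ht => (hW t ht).continuousAt.continuousWithinAt)
    (fun t ht => (hW t (Ioo_subset_Icc_self ht)).hasDerivWithinAt) hD.integrableOn_Icc
    (fun t ht => hDW t (Ioo_subset_Ico_self ht))
  have hend : 0 ≤ F T * Real.exp (Φ T) := by positivity
  linarith

end Inequalities

section SpatialIdentities

theorem integral_eq_integral_of_hasDerivAt_sub {f g G : ℝ → ℝ}
    (hG : ∀ x, HasDerivAt G (f x - g x) x) (hGsupp : HasCompactSupport G)
    (hf : Integrable f) (hg : Integrable g) : ∫ x, f x = ∫ x, g x := by
  have hGint : Integrable G := (continuous_iff_continuousAt.2 fun x =>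
    (hG x).continuousAt).integrable_of_hasCompactSupport hGsupp
  rw [← sub_eq_zero, ← integral_sub hf hg]
  exact integral_eq_zero_of_hasDerivAt_of_integrable hG (hf.sub hg) hGint

variable {A B C ε β : ℝ} {v g : ℝ → ℝ}

theorem hasDerivAt_iterated_of_contDiff_three (hv : ContDiff ℝ 3 v) (x : ℝ) :
    HasDerivAt v (deriv v x) x ∧ HasDerivAt (deriv v) (deriv (deriv v) x) x ∧
      HasDerivAt (deriv (deriv v)) (deriv (deriv (deriv v)) x) x := by
  have hv₁ : ContDiff ℝ 2 (deriv v) := hv.deriv'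
  have hv₂ : ContDiff ℝ 1 (deriv (deriv v)) := hv₁.deriv'
  exact ⟨(hv.differentiable (by simp) x).hasDerivAt, (hv₁.differentiable (by simp) x).hasDerivAt,
    (hv₂.differentiable (by simp) x).hasDerivAt⟩

theorem continuous_iterated_of_contDiff_three (hv : ContDiff ℝ 3 v) :
    Continuous v ∧ Continuous (deriv v) ∧ Continuous (deriv (deriv v)) ∧
      Continuous (deriv (deriv (deriv v))) := by
  have hv₁ : ContDiff ℝ 2 (deriv v) := hv.deriv'
  have hv₂ : ContDiff ℝ 1 (deriv (deriv v)) := hv₁.deriv'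
  exact ⟨hv.continuous, hv₁.continuous, hv₂.continuous, hv₂.continuous_deriv le_rfl⟩

theorem hasCompactSupport_of_jet_eq_zero (hsupp : HasCompactSupport v)
    (hg : ∀ x, v x = 0 → deriv v x = 0 → deriv (deriv v) x = 0 → deriv (deriv (deriv v)) x = 0 →
      g x = 0) :
    HasCompactSupport g := by
  refine .intro hsupp fun x hx => ?_
  have hx₁ : x ∉ tsupport (deriv v) := fun h => hx (tsupport_deriv_subset h)
  have hx₂ : x ∉ tsupport (deriv (deriv v)) := fun h => hx₁ (tsupport_deriv_subset h)
  have hx₃ : x ∉ tsupport (deriv (deriv (deriv v))) := fun h => hx₂ (tsupport_deriv_subset h)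
  exact hg x (image_eq_zero_of_notMem_tsupport hx) (image_eq_zero_of_notMem_tsupport hx₁)
    (image_eq_zero_of_notMem_tsupport hx₂) (image_eq_zero_of_notMem_tsupport hx₃)

theorem integrable_of_jet_eq_zero (hsupp : HasCompactSupport v) (hgcont : Continuous g)
    (hg : ∀ x, v x = 0 → deriv v x = 0 → deriv (deriv v) x = 0 → deriv (deriv (deriv v)) x = 0 →
      g x = 0) :
    Integrable g :=
  hgcont.integrable_of_hasCompactSupport (hasCompactSupport_of_jet_eq_zero hsupp hg)

/-- The spatial part of the Kudryashov–Sinelshchikov equation, with the sign that makes the equation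
read `∂ₜu = ksField A B C ε β (u t)`. -/
noncomputable def ksField (A B C ε β : ℝ) (v : ℝ → ℝ) (x : ℝ) : ℝ :=
  ε * deriv (deriv v) x + C * β * deriv v x * deriv (deriv v) x
    + B * β * deriv (fun y => v y * deriv (deriv v) y) x
    - β * deriv (deriv (deriv v)) x - A * v x * deriv v x

theorem ksField_eq (hv : ContDiff ℝ 3 v) : ksField A B C ε β v = fun x =>
    ε * deriv (deriv v) x + (B + C) * β * deriv v x * deriv (deriv v) x
      + B * β * v x * deriv (deriv (deriv v)) x
      - β * deriv (deriv (deriv v)) x - A * v x * deriv v x := by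
  ext x
  obtain ⟨h₀, -, h₂⟩ := hasDerivAt_iterated_of_contDiff_three hv x
  rw [ksField, (h₀.fun_mul h₂).deriv]
  ring

theorem integral_mul_ksField (hv : ContDiff ℝ 3 v) (hsupp : HasCompactSupport v) :
    ∫ x, v x * ksField A B C ε β v x =
      (C - B) * β * (∫ x, v x * deriv v x * deriv (deriv v) x) - ε * ∫ x, deriv v x ^ 2 := by
  obtain ⟨hc₀, hc₁, hc₂, hc₃⟩ := continuous_iterated_of_contDiff_three hv
  simp only [ksField_eq hv]
  rw [← integral_const_mul, ← integral_const_mul, ← integral_sub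
    (integrable_of_jet_eq_zero hsupp (by fun_prop) (by simp +contextual))
    (integrable_of_jet_eq_zero hsupp (by fun_prop) (by simp +contextual))]
  refine integral_eq_integral_of_hasDerivAt_sub (G := fun x => ε * (v x * deriv v x)
      + B * β * (v x ^ 2 * deriv (deriv v) x)
      - β * (v x * deriv (deriv v) x - deriv v x ^ 2 / 2) - A / 3 * v x ^ 3) (fun x => ?_)
    (hasCompactSupport_of_jet_eq_zero hsupp (by simp +contextual))
    (integrable_of_jet_eq_zero hsupp (by fun_prop) (by simp +contextual))
    (integrable_of_jet_eq_zero hsupp (by fun_prop) (by simp +contextual))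
  obtain ⟨h₀, h₁, h₂⟩ := hasDerivAt_iterated_of_contDiff_three hv x
  refine ((((h₀.mul h₁).const_mul ε).add (((h₀.pow 2).mul h₂).const_mul (B * β))).sub
    (((h₀.mul h₂).sub ((h₁.pow 2).div_const 2)).const_mul β)).sub
      ((h₀.pow 3).const_mul (A / 3)) |>.congr_deriv ?_
  simp only [Pi.pow_apply]
  push_cast
  ring

theorem integral_deriv_deriv_mul_ksField (hv : ContDiff ℝ 3 v) (hsupp : HasCompactSupport v) :
    ∫ x, deriv (deriv v) x * ksField A B C ε β v x =
      (B / 2 + C) * β * (∫ x, deriv v x * deriv (deriv v) x ^ 2)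
        - A * (∫ x, v x * deriv v x * deriv (deriv v) x) + ε * ∫ x, deriv (deriv v) x ^ 2 := by
  obtain ⟨hc₀, hc₁, hc₂, hc₃⟩ := continuous_iterated_of_contDiff_three hv
  simp only [ksField_eq hv]
  rw [← integral_const_mul, ← integral_const_mul, ← integral_const_mul, ← integral_sub
    (integrable_of_jet_eq_zero hsupp (by fun_prop) (by simp +contextual))
    (integrable_of_jet_eq_zero hsupp (by fun_prop) (by simp +contextual)), ← integral_add
    (integrable_of_jet_eq_zero hsupp (by fun_prop) (by simp +contextual))
    (integrable_of_jet_eq_zero hsupp (by fun_prop) (by simp +contextual))]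
  refine integral_eq_integral_of_hasDerivAt_sub
    (G := fun x => B * β / 2 * (v x * deriv (deriv v) x ^ 2) - β / 2 * deriv (deriv v) x ^ 2)
    (fun x => ?_)
    (hasCompactSupport_of_jet_eq_zero hsupp (by simp +contextual))
    (integrable_of_jet_eq_zero hsupp (by fun_prop) (by simp +contextual))
    (integrable_of_jet_eq_zero hsupp (by fun_prop) (by simp +contextual))
  obtain ⟨h₀, -, h₂⟩ := hasDerivAt_iterated_of_contDiff_three hv x
  refine ((h₀.mul (h₂.pow 2)).const_mul (B * β / 2)).sub ((h₂.pow 2).const_mul (β / 2))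
    |>.congr_deriv ?_
  simp only [Pi.pow_apply]
  push_cast
  ring

theorem integral_pow_three_mul_ksField (hv : ContDiff ℝ 3 v) (hsupp : HasCompactSupport v) :
    ∫ x, v x ^ 3 * ksField A B C ε β v x =
      3 * β * (∫ x, v x ^ 2 * deriv v x * deriv (deriv v) x)
        + (C - 3 * B) * β * (∫ x, v x ^ 3 * deriv v x * deriv (deriv v) x)
        - 3 * ε * ∫ x, (v x * deriv v x) ^ 2 := by
  obtain ⟨hc₀, hc₁, hc₂, hc₃⟩ := continuous_iterated_of_contDiff_three hv
  simp only [ksField_eq hv]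
  rw [← integral_const_mul, ← integral_const_mul, ← integral_const_mul, ← integral_add
    (integrable_of_jet_eq_zero hsupp (by fun_prop) (by simp +contextual))
    (integrable_of_jet_eq_zero hsupp (by fun_prop) (by simp +contextual)), ← integral_sub
    (integrable_of_jet_eq_zero hsupp (by fun_prop) (by simp +contextual))
    (integrable_of_jet_eq_zero hsupp (by fun_prop) (by simp +contextual))]
  refine integral_eq_integral_of_hasDerivAt_sub (G := fun x => ε * (v x ^ 3 * deriv v x)
      + B * β * (v x ^ 4 * deriv (deriv v) x) - β * (v x ^ 3 * deriv (deriv v) x)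
      - A / 5 * v x ^ 5) (fun x => ?_)
    (hasCompactSupport_of_jet_eq_zero hsupp (by simp +contextual))
    (integrable_of_jet_eq_zero hsupp (by fun_prop) (by simp +contextual))
    (integrable_of_jet_eq_zero hsupp (by fun_prop) (by simp +contextual))
  obtain ⟨h₀, h₁, h₂⟩ := hasDerivAt_iterated_of_contDiff_three hv x
  refine ((((h₀.pow 3).mul h₁).const_mul ε).add (((h₀.pow 4).mul h₂).const_mul (B * β))).sub
    (((h₀.pow 3).mul h₂).const_mul β) |>.sub ((h₀.pow 5).const_mul (A / 5)) |>.congr_deriv ?_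
  simp only [Pi.pow_apply]
  push_cast
  ring

end SpatialIdentities

/-- Smooth solutions on `[0, ∞) × ℝ`, spatially supported in a fixed interval, of the
Kudryashov–Sinelshchikov equation (with `D = 0`). -/
structure IsKSSolution (A B C ε β : ℝ) (u : ℝ → ℝ → ℝ) : Prop where
  smooth : SmoothWithSpatialSupport u
  residual_eq_zero : ∀ t : ℝ, 0 ≤ t → ∀ x : ℝ,
    deriv (fun τ => u τ x) t + A * u t x * deriv (u t) x + β * deriv (deriv (deriv (u t))) x
      - B * β * deriv (fun y => u t y * deriv (deriv (u t)) y) x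
      - C * β * deriv (u t) x * deriv (deriv (u t)) x - ε * deriv (deriv (u t)) x = 0

namespace IsKSSolution

variable {A B C ε β : ℝ} {u : ℝ → ℝ → ℝ} {t : ℝ}

theorem deriv_eq_ksField (hu : IsKSSolution A B C ε β u) (ht : 0 ≤ t) (x : ℝ) :
    deriv (fun τ => u τ x) t = ksField A B C ε β (u t) x := by
  rw [ksField]
  linarith [hu.residual_eq_zero t ht x]

theorem contDiff_three (hu : IsKSSolution A B C ε β u) (t : ℝ) : ContDiff ℝ 3 (u t) :=
  (hu.smooth.contDiff_slice t).of_le ENat.LEInfty.out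

theorem hasDerivAt_integral_sq (hu : IsKSSolution A B C ε β u) (ht : 0 ≤ t) :
    HasDerivAt (fun τ => ∫ x, u τ x ^ 2)
      (2 * ((C - B) * β * (∫ x, u t x * deriv (u t) x * deriv (deriv (u t)) x)
        - ε * ∫ x, deriv (u t) x ^ 2)) t := by
  refine (hu.smooth.hasDerivAt_integral_pow two_ne_zero t).congr_deriv ?_
  simp only [hu.deriv_eq_ksField ht, Nat.add_one_sub_one, pow_one, Nat.cast_ofNat,
    integral_mul_ksField (hu.contDiff_three t) (hu.smooth.hasCompactSupport_slice t)]

theorem hasDerivAt_integral_pow_four (hu : IsKSSolution A B C ε β u) (ht : 0 ≤ t) :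
    HasDerivAt (fun τ => ∫ x, u τ x ^ 4)
      (4 * (3 * β * (∫ x, u t x ^ 2 * deriv (u t) x * deriv (deriv (u t)) x)
        + (C - 3 * B) * β * (∫ x, u t x ^ 3 * deriv (u t) x * deriv (deriv (u t)) x)
        - 3 * ε * ∫ x, (u t x * deriv (u t) x) ^ 2)) t := by
  refine (hu.smooth.hasDerivAt_integral_pow four_ne_zero t).congr_deriv ?_
  simp only [hu.deriv_eq_ksField ht, Nat.add_one_sub_one, Nat.cast_ofNat,
    integral_pow_three_mul_ksField (hu.contDiff_three t) (hu.smooth.hasCompactSupport_slice t)]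

theorem hasDerivAt_integral_deriv_sq (hu : IsKSSolution A B C ε β u) (ht : 0 ≤ t) :
    HasDerivAt (fun τ => ∫ x, deriv (u τ) x ^ 2)
      (-2 * ((B / 2 + C) * β * (∫ x, deriv (u t) x * deriv (deriv (u t)) x ^ 2)
        - A * (∫ x, u t x * deriv (u t) x * deriv (deriv (u t)) x)
        + ε * ∫ x, deriv (deriv (u t)) x ^ 2)) t := by
  refine (hu.smooth.hasDerivAt_integral_deriv_sq t).congr_deriv ?_
  simp only [hu.deriv_eq_ksField ht,
    integral_deriv_deriv_mul_ksField (hu.contDiff_three t) (hu.smooth.hasCompactSupport_slice t)]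

end IsKSSolution

section LyapunovEstimate

variable {A C₀ κ ε β : ℝ} {v : ℝ → ℝ}

/-- The energy `‖v‖² + β ‖v'‖²`, which decays along solutions when `B = 2A/3` and `C = -A/3`. -/
noncomputable def ksEnergy (β : ℝ) (v : ℝ → ℝ) : ℝ :=
  (∫ x, v x ^ 2) + β * ∫ x, deriv v x ^ 2

/-- The Lyapunov functional `(A² + 1) ‖v‖⁴_{L⁴} + ε² ‖v'‖²`, whose growth along solutions is
controlled by the energy dissipation. The weight `A² + 1` lets the dissipation of the `L⁴` norm
absorb the contribution of the convective term `A u ∂ₓu` to the evolution of `‖∂ₓu‖²`. -/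
noncomputable def ksLyapunov (A ε : ℝ) (v : ℝ → ℝ) : ℝ :=
  (A ^ 2 + 1) * (∫ x, v x ^ 4) + ε ^ 2 * ∫ x, deriv v x ^ 2

/-- The part of the viscous dissipation of `ksLyapunov` that is left after all production terms
have been absorbed. -/
noncomputable def ksDissipation (A ε : ℝ) (v : ℝ → ℝ) : ℝ :=
  (A ^ 2 + 1) * ε * (∫ x, (v x * deriv v x) ^ 2) + ε ^ 3 * ∫ x, deriv (deriv v) x ^ 2

/-- The rate `K` in the growth bound `Z' ≤ K ε ‖∂ₓu‖² (1 + ε² ‖∂ₓu‖²)` for `Z = ksLyapunov A ε u`,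
valid for energy at most `C₀` and `β ≤ κ ε⁴`. -/
noncomputable def ksLyapunovRate (A C₀ κ : ℝ) : ℝ :=
  (A ^ 2 + 1) ^ 2 * κ * C₀ * (144 * C₀ + 1568 / 9 * A ^ 2 * (κ + C₀ ^ 2))

theorem ksEnergy_nonneg (hβ : 0 ≤ β) (v : ℝ → ℝ) : 0 ≤ ksEnergy β v := by
  unfold ksEnergy
  positivity

theorem mul_integral_deriv_sq_le_ksLyapunov (A ε : ℝ) (v : ℝ → ℝ) :
    ε ^ 2 * ∫ x, deriv v x ^ 2 ≤ ksLyapunov A ε v :=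
  le_add_of_nonneg_left (by positivity)

theorem ksDissipation_nonneg (hε : 0 ≤ ε) (v : ℝ → ℝ) : 0 ≤ ksDissipation A ε v := by
  unfold ksDissipation
  positivity

theorem mul_pow_four_le_of_energy_le (hv : ContDiff ℝ 1 v) (hsupp : HasCompactSupport v)
    (hβ : 0 ≤ β) (henergy : ksEnergy β v ≤ C₀) (x : ℝ) :
    β * v x ^ 4 ≤ C₀ ^ 2 := by
  calc β * v x ^ 4 ≤ β * (4 * (∫ y, v y ^ 2) * ∫ y, deriv v y ^ 2) := by
        gcongr
        exact pow_four_le_integral_sq_mul_integral_deriv_sq hv hsupp x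
    _ = 4 * (∫ y, v y ^ 2) * (β * ∫ y, deriv v y ^ 2) := by ring
    _ ≤ ((∫ y, v y ^ 2) + β * ∫ y, deriv v y ^ 2) ^ 2 := four_mul_le_sq_add _ _
    _ = ksEnergy β v ^ 2 := rfl
    _ ≤ C₀ ^ 2 := pow_le_pow_left₀ (ksEnergy_nonneg hβ v) henergy 2

theorem sq_mul_pow_six_le_of_energy_le (hv : ContDiff ℝ 1 v) (hsupp : HasCompactSupport v)
    (hκ : 0 ≤ κ) (hβ : 0 ≤ β) (hβε : β ≤ κ * ε ^ 4) (henergy : ksEnergy β v ≤ C₀) (x : ℝ) :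
    β ^ 2 * v x ^ 6 ≤ 2 * C₀ * κ * (κ + C₀ ^ 2) * ε ^ 6 * ∫ y, deriv v y ^ 2 := by
  have hP : 0 ≤ ∫ x, deriv v x ^ 2 := by positivity
  have hmass : ∫ x, v x ^ 2 ≤ C₀ := (le_add_of_nonneg_right (mul_nonneg hβ hP)).trans henergy
  have hpow : v x ^ 4 ≤ 4 * C₀ * ∫ y, deriv v y ^ 2 :=
    (pow_four_le_integral_sq_mul_integral_deriv_sq hv hsupp x).trans (by gcongr)
  have hsq : β * v x ^ 2 ≤ (κ + C₀ ^ 2) / 2 * ε ^ 2 := by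
    refine abs_le_of_sq_le_sq' ?_ (by positivity) |>.2
    calc (β * v x ^ 2) ^ 2 = β * (β * v x ^ 4) := by ring
      _ ≤ κ * ε ^ 4 * C₀ ^ 2 := by
          gcongr
          exact mul_pow_four_le_of_energy_le hv hsupp hβ henergy x
      _ = 4 * κ * C₀ ^ 2 / 4 * ε ^ 4 := by ring
      _ ≤ (κ + C₀ ^ 2) ^ 2 / 4 * ε ^ 4 := by
          gcongr
          exact four_mul_le_sq_add _ _
      _ = _ := by ring
  calc β ^ 2 * v x ^ 6 = β * (β * v x ^ 2) * v x ^ 4 := by ring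
    _ ≤ κ * ε ^ 4 * ((κ + C₀ ^ 2) / 2 * ε ^ 2) * (4 * C₀ * ∫ y, deriv v y ^ 2) := by gcongr
    _ = _ := by ring

theorem sq_mul_integral_sq_mul_deriv_sq_le (hv : ContDiff ℝ 1 v) (hsupp : HasCompactSupport v)
    (hβ : 0 ≤ β) (hβε : β ≤ κ * ε ^ 4) (henergy : ksEnergy β v ≤ C₀) :
    β ^ 2 * ∫ x, (v x ^ 2 * deriv v x) ^ 2 ≤ κ * C₀ ^ 2 * ε ^ 4 * ∫ x, deriv v x ^ 2 := by
  have hc₀ := hv.continuous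
  have hc₁ : Continuous (deriv v) := hv.continuous_deriv le_rfl
  refine mul_integral_mul_sq_le_mul_integral_sq
    (integrable_of_jet_eq_zero hsupp (by fun_prop) (by simp +contextual))
    (integrable_of_jet_eq_zero hsupp (by fun_prop) (by simp +contextual)) fun x => ?_
  calc β ^ 2 * (v x ^ 2) ^ 2 = β * (β * v x ^ 4) := by ring
    _ ≤ κ * ε ^ 4 * C₀ ^ 2 :=
        mul_le_mul hβε (mul_pow_four_le_of_energy_le hv hsupp hβ henergy x) (by positivity)
          (hβ.trans hβε)
    _ = _ := by ring

theorem sq_mul_integral_pow_three_mul_deriv_sq_le (hv : ContDiff ℝ 1 v)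
    (hsupp : HasCompactSupport v) (hκ : 0 ≤ κ) (hβ : 0 ≤ β) (hβε : β ≤ κ * ε ^ 4)
    (henergy : ksEnergy β v ≤ C₀) :
    β ^ 2 * ∫ x, (v x ^ 3 * deriv v x) ^ 2 ≤
      2 * C₀ * κ * (κ + C₀ ^ 2) * ε ^ 6 * (∫ x, deriv v x ^ 2) ^ 2 := by
  have hc₀ := hv.continuous
  have hc₁ : Continuous (deriv v) := hv.continuous_deriv le_rfl
  rw [sq (∫ x, deriv v x ^ 2), ← mul_assoc]
  refine mul_integral_mul_sq_le_mul_integral_sq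
    (integrable_of_jet_eq_zero hsupp (by fun_prop) (by simp +contextual))
    (integrable_of_jet_eq_zero hsupp (by fun_prop) (by simp +contextual)) fun x => ?_
  rw [← pow_mul]
  exact sq_mul_pow_six_le_of_energy_le hv hsupp hκ hβ hβε henergy x

theorem mul_integral_sq_mul_deriv_mul_deriv_deriv_le (hv : ContDiff ℝ 3 v)
    (hsupp : HasCompactSupport v) (hε : 0 < ε) (hβ : 0 ≤ β) (hβε : β ≤ κ * ε ^ 4)
    (henergy : ksEnergy β v ≤ C₀) (c : ℝ) :
    c * β * ∫ x, v x ^ 2 * deriv v x * deriv (deriv v) x ≤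
      c ^ 2 * κ * C₀ ^ 2 * ε * (∫ x, deriv v x ^ 2)
        + ε ^ 3 / 4 * ∫ x, deriv (deriv v) x ^ 2 := by
  obtain ⟨hc₀, hc₁, hc₂, -⟩ := continuous_iterated_of_contDiff_three hv
  have hmem : MemLp (fun x => v x ^ 2 * deriv v x) 2 := Continuous.memLp_of_hasCompactSupport
    (by fun_prop) (hasCompactSupport_of_jet_eq_zero hsupp (by simp +contextual))
  refine (mul_integral_mul_le_integral_sq_add_integral_sq hmem
    (hc₂.memLp_of_hasCompactSupport hsupp.deriv.deriv) (c * β) (s := ε ^ 3 / 4)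
    (by positivity)).trans ?_
  gcongr ?_ + _
  calc (c * β) ^ 2 / (4 * (ε ^ 3 / 4)) * ∫ x, (v x ^ 2 * deriv v x) ^ 2
      = c ^ 2 / ε ^ 3 * (β ^ 2 * ∫ x, (v x ^ 2 * deriv v x) ^ 2) := by ring
    _ ≤ c ^ 2 / ε ^ 3 * (κ * C₀ ^ 2 * ε ^ 4 * ∫ x, deriv v x ^ 2) := by
        gcongr _ * ?_
        exact sq_mul_integral_sq_mul_deriv_sq_le (hv.of_le (by norm_num)) hsupp hβ hβε henergy
    _ = _ := by field_simp

theorem mul_integral_pow_three_mul_deriv_mul_deriv_deriv_le (hv : ContDiff ℝ 3 v)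
    (hsupp : HasCompactSupport v) (hε : 0 < ε) (hκ : 0 ≤ κ) (hβ : 0 ≤ β) (hβε : β ≤ κ * ε ^ 4)
    (henergy : ksEnergy β v ≤ C₀) (c : ℝ) :
    c * β * ∫ x, v x ^ 3 * deriv v x * deriv (deriv v) x ≤
      2 * c ^ 2 * C₀ * κ * (κ + C₀ ^ 2) * ε ^ 3 * (∫ x, deriv v x ^ 2) ^ 2
        + ε ^ 3 / 4 * ∫ x, deriv (deriv v) x ^ 2 := by
  obtain ⟨hc₀, hc₁, hc₂, -⟩ := continuous_iterated_of_contDiff_three hv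
  have hmem : MemLp (fun x => v x ^ 3 * deriv v x) 2 := Continuous.memLp_of_hasCompactSupport
    (by fun_prop) (hasCompactSupport_of_jet_eq_zero hsupp (by simp +contextual))
  refine (mul_integral_mul_le_integral_sq_add_integral_sq hmem
    (hc₂.memLp_of_hasCompactSupport hsupp.deriv.deriv) (c * β) (s := ε ^ 3 / 4)
    (by positivity)).trans ?_
  gcongr ?_ + _
  calc (c * β) ^ 2 / (4 * (ε ^ 3 / 4)) * ∫ x, (v x ^ 3 * deriv v x) ^ 2
      = c ^ 2 / ε ^ 3 * (β ^ 2 * ∫ x, (v x ^ 3 * deriv v x) ^ 2) := by ring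
    _ ≤ c ^ 2 / ε ^ 3 * (2 * C₀ * κ * (κ + C₀ ^ 2) * ε ^ 6 * (∫ x, deriv v x ^ 2) ^ 2) := by
        gcongr _ * ?_
        exact sq_mul_integral_pow_three_mul_deriv_sq_le (hv.of_le (by norm_num)) hsupp hκ hβ hβε
          henergy
    _ = _ := by field_simp

theorem mul_integral_mul_deriv_mul_deriv_deriv_le (hv : ContDiff ℝ 3 v)
    (hsupp : HasCompactSupport v) (hε : 0 < ε) :
    2 * A * ε ^ 2 * ∫ x, v x * deriv v x * deriv (deriv v) x ≤
      2 * A ^ 2 * ε * (∫ x, (v x * deriv v x) ^ 2)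
        + ε ^ 3 / 2 * ∫ x, deriv (deriv v) x ^ 2 := by
  obtain ⟨hc₀, hc₁, hc₂, -⟩ := continuous_iterated_of_contDiff_three hv
  have hmem : MemLp (fun x => v x * deriv v x) 2 := Continuous.memLp_of_hasCompactSupport
    (by fun_prop) hsupp.mul_right
  refine (mul_integral_mul_le_integral_sq_add_integral_sq hmem
    (hc₂.memLp_of_hasCompactSupport hsupp.deriv.deriv) (2 * A * ε ^ 2) (s := ε ^ 3 / 2)
    (by positivity)).trans_eq ?_
  field_simp
  ring

theorem ksLyapunovRate_nonneg (hκ : 0 ≤ κ) (hC₀ : 0 ≤ C₀) : 0 ≤ ksLyapunovRate A C₀ κ := by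
  unfold ksLyapunovRate
  positivity

-- The left-hand side is the time derivative of `ksLyapunov A ε` along a solution through `v`.
theorem ksLyapunov_production_le (hv : ContDiff ℝ 3 v) (hsupp : HasCompactSupport v) (hε : 0 < ε)
    (hκ : 0 ≤ κ) (hβ : 0 ≤ β) (hβε : β ≤ κ * ε ^ 4) (henergy : ksEnergy β v ≤ C₀) :
    12 * (A ^ 2 + 1) * β * (∫ x, v x ^ 2 * deriv v x * deriv (deriv v) x)
        + -(28 * A / 3 * (A ^ 2 + 1)) * β * (∫ x, v x ^ 3 * deriv v x * deriv (deriv v) x)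
        + 2 * A * ε ^ 2 * (∫ x, v x * deriv v x * deriv (deriv v) x)
        - 12 * (A ^ 2 + 1) * ε * (∫ x, (v x * deriv v x) ^ 2)
        - 2 * ε ^ 3 * (∫ x, deriv (deriv v) x ^ 2) ≤
      ksLyapunovRate A C₀ κ * (ε * ∫ x, deriv v x ^ 2) * (1 + ε ^ 2 * ∫ x, deriv v x ^ 2)
        - ksDissipation A ε v := by
  have hdisp := mul_integral_sq_mul_deriv_mul_deriv_deriv_le hv hsupp hε hβ hβε henergy
    (12 * (A ^ 2 + 1))
  have hnonlin := mul_integral_pow_three_mul_deriv_mul_deriv_deriv_le hv hsupp hε hκ hβ hβε henergy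
    (-(28 * A / 3 * (A ^ 2 + 1)))
  have hconv := mul_integral_mul_deriv_mul_deriv_deriv_le (A := A) hv hsupp hε
  have hC₀ : 0 ≤ C₀ := (ksEnergy_nonneg hβ v).trans henergy
  have hslack₁ : 0 ≤ (9 * A ^ 2 + 11) * ε * ∫ x, (v x * deriv v x) ^ 2 := by positivity
  have hslack₂ : 0 ≤ 144 * (A ^ 2 + 1) ^ 2 * κ * C₀ ^ 2 * ε ^ 3 * (∫ x, deriv v x ^ 2) ^ 2 := by
    positivity
  have hslack₃ : 0 ≤ 1568 / 9 * A ^ 2 * (A ^ 2 + 1) ^ 2 * κ * C₀ * (κ + C₀ ^ 2) * ε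
      * ∫ x, deriv v x ^ 2 := by positivity
  unfold ksLyapunovRate ksDissipation
  linarith

end LyapunovEstimate

namespace SmoothWithSpatialSupport

variable {ε : ℝ} {u : ℝ → ℝ → ℝ} {t : ℝ}

theorem continuous_integral_mul_deriv_sq (hu : SmoothWithSpatialSupport u) :
    Continuous fun s => ∫ x, (u s x * deriv (u s) x) ^ 2 :=
  ((hu.mul hu.deriv_snd).pow two_ne_zero).continuous_integral

theorem continuous_integral_deriv_deriv_sq (hu : SmoothWithSpatialSupport u) :
    Continuous fun s => ∫ x, deriv (deriv (u s)) x ^ 2 :=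
  (hu.deriv_snd.deriv_snd.pow two_ne_zero).continuous_integral

theorem continuous_ksDissipation (hu : SmoothWithSpatialSupport u) (A ε : ℝ) :
    Continuous fun s => ksDissipation A ε (u s) :=
  (hu.continuous_integral_mul_deriv_sq.const_mul _).add
    (hu.continuous_integral_deriv_deriv_sq.const_mul _)

theorem mul_integral_mul_deriv_sq_le_integral_ksDissipation (hu : SmoothWithSpatialSupport u)
    (hε : 0 ≤ ε) (ht : 0 ≤ t) (A : ℝ) :
    ε * (∫ s in (0 : ℝ)..t, ∫ x, (u s x * deriv (u s) x) ^ 2) ≤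
      ∫ s in (0 : ℝ)..t, ksDissipation A ε (u s) := by
  rw [← intervalIntegral.integral_const_mul]
  refine intervalIntegral.integral_mono ht
    ((hu.continuous_integral_mul_deriv_sq.const_mul ε).intervalIntegrable 0 t)
    ((hu.continuous_ksDissipation A ε).intervalIntegrable 0 t) fun s => ?_
  have hX : 0 ≤ A ^ 2 * (ε * ∫ x, (u s x * deriv (u s) x) ^ 2) := by positivity
  have hQ : 0 ≤ ε ^ 3 * ∫ x, deriv (deriv (u s)) x ^ 2 := by positivity
  unfold ksDissipation
  linarith

theorem mul_integral_deriv_deriv_sq_le_integral_ksDissipation (hu : SmoothWithSpatialSupport u)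
    (hε : 0 ≤ ε) (ht : 0 ≤ t) (A : ℝ) :
    ε ^ 3 * (∫ s in (0 : ℝ)..t, ∫ x, deriv (deriv (u s)) x ^ 2) ≤
      ∫ s in (0 : ℝ)..t, ksDissipation A ε (u s) := by
  rw [← intervalIntegral.integral_const_mul]
  exact intervalIntegral.integral_mono ht
    ((hu.continuous_integral_deriv_deriv_sq.const_mul (ε ^ 3)).intervalIntegrable 0 t)
    ((hu.continuous_ksDissipation A ε).intervalIntegrable 0 t)
    fun s => le_add_of_nonneg_left (by positivity)

end SmoothWithSpatialSupport

namespace IsKSSolution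

variable {A C₀ κ ε β : ℝ} {u : ℝ → ℝ → ℝ} {t : ℝ}

-- All cubic terms cancel because `(C - B) + A = 0` and `B / 2 + C = 0`.
theorem hasDerivAt_ksEnergy (hu : IsKSSolution A (2 * A / 3) (-(A / 3)) ε β u) (ht : 0 ≤ t) :
    HasDerivAt (fun τ => ksEnergy β (u τ))
      (-2 * ε * ((∫ x, deriv (u t) x ^ 2) + β * ∫ x, deriv (deriv (u t)) x ^ 2)) t :=
  ((hu.hasDerivAt_integral_sq ht).add
    ((hu.hasDerivAt_integral_deriv_sq ht).const_mul β)).congr_deriv (by ring)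

theorem ksEnergy_le (hu : IsKSSolution A (2 * A / 3) (-(A / 3)) ε β u) (hε : 0 ≤ ε) (hβ : 0 ≤ β)
    (ht : 0 ≤ t) : ksEnergy β (u t) ≤ ksEnergy β (u 0) := by
  refine antitoneOn_of_hasDerivWithinAt_nonpos (convex_Ici 0)
    (fun s hs => (hu.hasDerivAt_ksEnergy hs).continuousAt.continuousWithinAt)
    (fun s hs => (hu.hasDerivAt_ksEnergy (interior_subset hs)).hasDerivWithinAt) (fun s _ => ?_)
    self_mem_Ici ht ht
  have hdiss : 0 ≤ (∫ x, deriv (u s) x ^ 2) + β * ∫ x, deriv (deriv (u s)) x ^ 2 := by positivity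
  nlinarith

theorem hasDerivAt_ksLyapunov (hu : IsKSSolution A (2 * A / 3) (-(A / 3)) ε β u) (ht : 0 ≤ t) :
    HasDerivAt (fun τ => ksLyapunov A ε (u τ))
      (12 * (A ^ 2 + 1) * β * (∫ x, u t x ^ 2 * deriv (u t) x * deriv (deriv (u t)) x)
        + -(28 * A / 3 * (A ^ 2 + 1)) * β
          * (∫ x, u t x ^ 3 * deriv (u t) x * deriv (deriv (u t)) x)
        + 2 * A * ε ^ 2 * (∫ x, u t x * deriv (u t) x * deriv (deriv (u t)) x)
        - 12 * (A ^ 2 + 1) * ε * (∫ x, (u t x * deriv (u t) x) ^ 2)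
        - 2 * ε ^ 3 * ∫ x, deriv (deriv (u t)) x ^ 2) t :=
  (((hu.hasDerivAt_integral_pow_four ht).const_mul (A ^ 2 + 1)).add
    ((hu.hasDerivAt_integral_deriv_sq ht).const_mul (ε ^ 2))).congr_deriv (by ring)

theorem integral_ksDissipation_le (hu : IsKSSolution A (2 * A / 3) (-(A / 3)) ε β u)
    (hε : 0 < ε) (hβ : 0 ≤ β) (hβε : β ≤ κ * ε ^ 4) (henergy : ksEnergy β (u 0) ≤ C₀)
    (ht : 0 ≤ t) :
    ∫ s in (0 : ℝ)..t, ksDissipation A ε (u s) ≤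
      (1 + ksLyapunov A ε (u 0)) * Real.exp (ksLyapunovRate A C₀ κ / 2 * ksEnergy β (u 0)) := by
  have hκ : 0 ≤ κ := nonneg_of_mul_nonneg_left (hβ.trans hβε) (by positivity)
  have hK : 0 ≤ ksLyapunovRate A C₀ κ :=
    ksLyapunovRate_nonneg hκ ((ksEnergy_nonneg hβ _).trans henergy)
  have hZ (s : ℝ) : ε ^ 2 * ∫ x, deriv (u s) x ^ 2 ≤ ksLyapunov A ε (u s) :=
    mul_integral_deriv_sq_le_ksLyapunov A ε (u s)
  refine integral_dissipation_le_mul_exp (F := fun s => 1 + ksLyapunov A ε (u s))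
    (Φ := fun s => ksLyapunovRate A C₀ κ / 2 * ksEnergy β (u s)) ht
    (fun s hs => (hu.hasDerivAt_ksLyapunov hs.1).const_add 1)
    (fun s hs => (hu.hasDerivAt_ksEnergy hs.1).const_mul _)
    (add_nonneg zero_le_one (le_trans (by positivity) (hZ t)))
    (fun s _ => mul_nonneg (by positivity) (ksEnergy_nonneg hβ _))
    (hu.smooth.continuous_ksDissipation A ε).continuousOn
    (fun s _ => ksDissipation_nonneg hε.le _) fun s hs => ?_
  have hgrowth := ksLyapunov_production_le (A := A) (hu.contDiff_three s)
    (hu.smooth.hasCompactSupport_slice s) hε hκ hβ hβε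
    ((hu.ksEnergy_le hε.le hβ hs.1).trans henergy)
  have hQ : 0 ≤ ε * (β * ∫ x, deriv (deriv (u s)) x ^ 2) := by positivity
  have habsorb : ksLyapunovRate A C₀ κ * (ε * ∫ x, deriv (u s) x ^ 2)
        * (1 + ε ^ 2 * ∫ x, deriv (u s) x ^ 2) ≤
      ksLyapunovRate A C₀ κ * (ε * (∫ x, deriv (u s) x ^ 2)
        + ε * (β * ∫ x, deriv (deriv (u s)) x ^ 2)) * (1 + ksLyapunov A ε (u s)) := by
    gcongr
    · exact le_add_of_nonneg_right hQ
    · exact hZ s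
  linarith

end IsKSSolution

theorem stmt_9_general (A C₀ κ : ℝ) :
    ∃ M : ℝ, 0 < M ∧ ∀ (ε β : ℝ) (u : ℝ → ℝ → ℝ), 0 < ε → 0 ≤ β →
      IsKSSolution A (2 * A / 3) (-(A / 3)) ε β u →
      (∫ x, u 0 x ^ 2) + (∫ x, u 0 x ^ 4) + (β + ε ^ 2) * (∫ x, deriv (u 0) x ^ 2) ≤ C₀ →
      β ≤ κ * ε ^ 4 → ∀ t : ℝ, 0 ≤ t →
        ε * (∫ s in (0 : ℝ)..t, ∫ x, (u s x * deriv (u s) x) ^ 2) ≤ M ∧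
        ε ^ 3 * (∫ s in (0 : ℝ)..t, ∫ x, deriv (deriv (u s)) x ^ 2) ≤ M := by
  refine ⟨(1 + (A ^ 2 + 2) * |C₀|) * Real.exp (ksLyapunovRate A C₀ κ / 2 * |C₀|), by positivity,
    fun ε β u hε hβ hu hinit hβε t ht => ?_⟩
  have hI : 0 ≤ ∫ x, u 0 x ^ 2 := by positivity
  have hL4 : 0 ≤ ∫ x, u 0 x ^ 4 := by positivity
  have hβP : 0 ≤ β * ∫ x, deriv (u 0) x ^ 2 := by positivity
  have hεP : 0 ≤ ε ^ 2 * ∫ x, deriv (u 0) x ^ 2 := by positivity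
  have henergy : ksEnergy β (u 0) ≤ C₀ := by unfold ksEnergy; linarith
  have hlyapunov : ksLyapunov A ε (u 0) ≤ (A ^ 2 + 2) * C₀ := calc
    ksLyapunov A ε (u 0) ≤ (A ^ 2 + 1) * C₀ + C₀ := by unfold ksLyapunov; gcongr <;> linarith
    _ = (A ^ 2 + 2) * C₀ := by ring
  have hC₀ : 0 ≤ C₀ := (ksEnergy_nonneg hβ _).trans henergy
  have hκ : 0 ≤ κ := nonneg_of_mul_nonneg_left (hβ.trans hβε) (by positivity)
  have hK : 0 ≤ ksLyapunovRate A C₀ κ := ksLyapunovRate_nonneg hκ hC₀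
  have hdiss : ∫ s in (0 : ℝ)..t, ksDissipation A ε (u s) ≤
      (1 + (A ^ 2 + 2) * |C₀|) * Real.exp (ksLyapunovRate A C₀ κ / 2 * |C₀|) := by
    rw [abs_of_nonneg hC₀]
    refine (hu.integral_ksDissipation_le hε hβ hβε henergy ht).trans ?_
    gcongr
  exact ⟨hu.smooth.mul_integral_mul_deriv_sq_le_integral_ksDissipation hε.le ht A |>.trans hdiss,
    hu.smooth.mul_integral_deriv_deriv_sq_le_integral_ksDissipation hε.le ht A |>.trans hdiss⟩

/-- Uniform bounds: `√ε u ∂ₓu` and `ε√ε ∂ₓ²u` are bounded in `L²(ℝ⁺×ℝ)`. -/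
theorem stmt_9 (A C₀ : ℝ) (hA : A ≠ 0) (hC₀pos : 0 < C₀) :
    ∃ M : ℝ, 0 < M ∧
      ∀ (ε β : ℝ) (u : ℝ → ℝ → ℝ),
        0 < ε → 0 < β →
        ContDiff ℝ (⊤ : ℕ∞) (Function.uncurry u) →
        (∃ R > (0:ℝ), ∀ t x : ℝ, R ≤ |x| → u t x = 0) →
        (∀ t : ℝ, 0 ≤ t → ∀ x : ℝ,
          deriv (fun τ => u τ x) t
            + A * u t x * deriv (u t) x
            + β * deriv (deriv (deriv (u t))) x
            - (2 * A / 3) * β * deriv (fun y => u t y * deriv (deriv (u t)) y) x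
            - (-(A / 3)) * β * deriv (u t) x * deriv (deriv (u t)) x
            - ε * deriv (deriv (u t)) x = 0) →
        ((∫ x : ℝ, (u 0 x) ^ 2) + (∫ x : ℝ, (u 0 x) ^ 4)
            + (β + ε ^ 2) * (∫ x : ℝ, (deriv (u 0) x) ^ 2) ≤ C₀) →
        β ≤ ε ^ 4 / (Real.sqrt C₀ * A ^ 2) →
        ∀ t : ℝ, 0 ≤ t →
          ε * (∫ s in (0:ℝ)..t, ∫ x : ℝ, (u s x * deriv (u s) x) ^ 2) ≤ M ∧
          ε ^ 3 * (∫ s in (0:ℝ)..t, ∫ x : ℝ, (deriv (deriv (u s)) x) ^ 2) ≤ M := by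
  obtain ⟨M, hM, hbound⟩ := stmt_9_general A C₀ (Real.sqrt C₀ * A ^ 2)⁻¹
  exact ⟨M, hM, fun ε β u hε hβ hsmooth ⟨R, _, hR⟩ hpde hinit hβε =>
    hbound ε β u hε hβ.le ⟨⟨hsmooth, R, hR⟩, hpde⟩ hinit (hβε.trans_eq (div_eq_inv_mul _ _))⟩
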